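/- The following four identities hold: (L_{t₁,t₂}⊗I_{t₃})∘(I_{t₁}⊗Y_{t₂,t₃}) = Y_{t₄,t₃}∘L_{t₁,t₆} + ((−1)^{σ₂}·λ₁/(λ₁+λ₂))·Y'_{t₄,t₃}∘L'_{t₁,t₆} as linear maps V_{t₁}⊗V_{t₆} → V_{t₄}⊗V_{t₃}; (L'_{t₁,t₂}⊗I_{t₃})∘(I_{t₁}⊗Y'_{t₂,t₃}) = Y'_{t₇,t₃}∘L'_{t₁,t₉} − ((−1)^{σ₂}·λ₃/(λ₂+λ₃))·Y_{t₇,t₃}∘L_{t₁,t₉} as linear maps V_{t₁}⊗V_{t₉} → V_{t₇}⊗V_{t₃}; (L'_{t₁,t₂}⊗I_{t₃})∘(I_{t₁}⊗Y_{t₂,t₃}) = Y_{t₇,t₃}∘L'_{t₁,t₆} as linear maps V_{t₁}⊗V_{t₆} → V_{t₇}⊗V_{t₃}; and (L_{t₁,t₂}⊗I_{t₃})∘(I_{t₁}⊗Y'_{t₂,t₃}) = κ·Y'_{t₄,t₃}∘L_{t₁,t₉} as linear maps V_{t₁}⊗V_{t₉} → V_{t₄}⊗V_{t₃}. -/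

import Mathlib

set_option linter.unusedVariables false

open TensorProduct

noncomputable section

/-- a triple t = (λ, μ, σ) ∈ ℚ × ℚ × ℤ/2 -/
structure Triple where
  lam : ℚ
  mu : ℚ
  sg : ZMod 2

instance : Add Triple := ⟨fun a b => ⟨a.lam + b.lam, a.mu + b.mu, a.sg + b.sg⟩⟩
instance : Neg Triple := ⟨fun a => ⟨-a.lam, -a.mu, -a.sg⟩⟩
instance : Sub Triple := ⟨fun a b => a + -b⟩

def e₂ : Triple := ⟨0, 1, 0⟩
def e₃ : Triple := ⟨0, 0, 1⟩
/-- t* = (−λ, −μ, σ+1) -/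
def Triple.star (t : Triple) : Triple := ⟨-t.lam, -t.mu, t.sg + 1⟩

/-- the underlying space of every V_t: basis v = (1,0) (degree σ), w = (0,1) (degree σ+1) -/
abbrev V : Type := ℚ × ℚ
abbrev VV : Type := V ⊗[ℚ] V
abbrev VVV : Type := V ⊗[ℚ] VV

def vv : V := (1, 0)
def ww : V := (0, 1)

/-- (−1)^σ -/
def sgn (s : ZMod 2) : ℚ := if s = 0 then 1 else -1

/-- H: v ↦ (μ+1)v, w ↦ (μ−1)w -/
def opH (t : Triple) : V →ₗ[ℚ] V :=
  LinearMap.prodMap ((t.mu + 1) • LinearMap.id) ((t.mu - 1) • LinearMap.id)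
/-- D: multiplication by λ -/
def opD (t : Triple) : V →ₗ[ℚ] V := t.lam • LinearMap.id
/-- E: v ↦ 0, w ↦ λv -/
def opE (t : Triple) : V →ₗ[ℚ] V := (LinearMap.inl ℚ ℚ ℚ) ∘ₗ (t.lam • LinearMap.snd ℚ ℚ ℚ)
/-- F: v ↦ w, w ↦ 0 -/
def opF (t : Triple) : V →ₗ[ℚ] V := (LinearMap.inr ℚ ℚ ℚ) ∘ₗ (LinearMap.fst ℚ ℚ ℚ)
/-- the parity operator x ↦ (−1)^{deg x} x on V_t -/
def opJ (t : Triple) : V →ₗ[ℚ] V :=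
  LinearMap.prodMap (sgn t.sg • LinearMap.id) ((- sgn t.sg) • LinearMap.id)

/-- the four generators H, D, E, F of gl(1|1) -/
inductive Gen | H | D | E | F

/-- H and D have degree 0; E and F have degree 1 -/
def Gen.isEven : Gen → Bool
  | .H => true | .D => true | .E => false | .F => false

def op : Gen → Triple → V →ₗ[ℚ] V
  | .H, t => opH t
  | .D, t => opD t
  | .E, t => opE t
  | .F, t => opF t

/-- the super-Leibniz action X·(x⊗y) = (X·x)⊗y + (−1)^{deg X·deg x}·x⊗(X·y)
on V_{t₁}⊗V_{t₂} (the sign being implemented by the parity operator) -/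
def op2 (g : Gen) (t₁ t₂ : Triple) : VV →ₗ[ℚ] VV :=
  TensorProduct.map (op g t₁) LinearMap.id +
  TensorProduct.map (if g.isEven then LinearMap.id else opJ t₁) (op g t₂)

/-- the linear map ℚ×ℚ → M sending (1,0) ↦ p and (0,1) ↦ q -/
def bmap {M : Type*} [AddCommGroup M] [Module ℚ M] (p q : M) : V →ₗ[ℚ] M :=
  LinearMap.coprod (LinearMap.toSpanSingleton ℚ M p) (LinearMap.toSpanSingleton ℚ M q)

/-- Y_{t₁,t₂} : V_{t₁+t₂+e₂} → V_{t₁}⊗V_{t₂} -/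
def Ymap (t₁ t₂ : Triple) : V →ₗ[ℚ] VV :=
  bmap (vv ⊗ₜ[ℚ] vv) (ww ⊗ₜ[ℚ] vv + sgn t₁.sg • (vv ⊗ₜ[ℚ] ww))

/-- Y'_{t₁,t₂} : V_{t₁+t₂−e₂+e₃} → V_{t₁}⊗V_{t₂} -/
def Y'map (t₁ t₂ : Triple) : V →ₗ[ℚ] VV :=
  bmap ((t₁.lam + t₂.lam)⁻¹ •
      (t₁.lam • (vv ⊗ₜ[ℚ] ww) - (sgn t₁.sg * t₂.lam) • (ww ⊗ₜ[ℚ] vv)))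
    (ww ⊗ₜ[ℚ] ww)

/-- L_{t₁,t₂} : V_{t₁}⊗V_{t₂} → V_{t₁+t₂+e₂} -/
def Lmap (t₁ t₂ : Triple) : VV →ₗ[ℚ] V :=
  TensorProduct.lift (LinearMap.mk₂ ℚ
    (fun x y => ((x.1 * y.1 : ℚ),
      (t₁.lam / (t₁.lam + t₂.lam)) * (x.2 * y.1)
        + (sgn t₁.sg * t₂.lam / (t₁.lam + t₂.lam)) * (x.1 * y.2)))
    (by intro x x' y; apply Prod.ext <;> simp <;> ring)
    (by intro a x y; apply Prod.ext <;> simp [smul_eq_mul] <;> ring)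
    (by intro x y y'; apply Prod.ext <;> simp <;> ring)
    (by intro a x y; apply Prod.ext <;> simp [smul_eq_mul] <;> ring))

/-- L'_{t₁,t₂} : V_{t₁}⊗V_{t₂} → V_{t₁+t₂−e₂+e₃} -/
def L'map (t₁ t₂ : Triple) : VV →ₗ[ℚ] V :=
  TensorProduct.lift (LinearMap.mk₂ ℚ
    (fun x y => ((x.1 * y.2 - sgn t₁.sg * (x.2 * y.1) : ℚ), (x.2 * y.2 : ℚ)))
    (by intro x x' y; apply Prod.ext <;> simp <;> ring)
    (by intro a x y; apply Prod.ext <;> simp [smul_eq_mul] <;> ring)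
    (by intro x y y'; apply Prod.ext <;> simp <;> ring)
    (by intro a x y; apply Prod.ext <;> simp [smul_eq_mul] <;> ring))

/-- ∩_t : V_{t*}⊗V_t → ℚ -/
def capMap (t : Triple) : VV →ₗ[ℚ] ℚ :=
  TensorProduct.lift (LinearMap.mk₂ ℚ
    (fun x y => (x.1 * y.2 + sgn t.sg * (x.2 * y.1) : ℚ))
    (by intro x x' y; simp; ring)
    (by intro a x y; simp [smul_eq_mul]; ring)
    (by intro x y y'; simp; ring)
    (by intro a x y; simp [smul_eq_mul]; ring))

/-- ∪_t : ℚ → V_{t*}⊗V_t -/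
def cupMap (t : Triple) : ℚ →ₗ[ℚ] VV :=
  LinearMap.toSpanSingleton ℚ VV (ww ⊗ₜ[ℚ] vv - sgn t.sg • (vv ⊗ₜ[ℚ] ww))


/-- t₄ = t₁+t₂+e₂ -/
def T4 (t₁ t₂ : Triple) : Triple := t₁ + t₂ + e₂
/-- t₅ = t₄+t₃+e₂ -/
def T5 (t₁ t₂ t₃ : Triple) : Triple := T4 t₁ t₂ + t₃ + e₂
/-- t₆ = t₂+t₃+e₂ -/
def T6 (t₂ t₃ : Triple) : Triple := t₂ + t₃ + e₂
/-- t₇ = t₄−2e₂+e₃ -/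
def T7 (t₁ t₂ : Triple) : Triple := T4 t₁ t₂ - e₂ - e₂ + e₃
/-- t₈ = t₅−2e₂+e₃ -/
def T8 (t₁ t₂ t₃ : Triple) : Triple := T5 t₁ t₂ t₃ - e₂ - e₂ + e₃
/-- t₉ = t₆−2e₂+e₃ -/
def T9 (t₂ t₃ : Triple) : Triple := T6 t₂ t₃ - e₂ - e₂ + e₃
/-- κ = λ₂(λ₁+λ₂+λ₃)/((λ₁+λ₂)(λ₂+λ₃)) -/
def kap (t₁ t₂ t₃ : Triple) : ℚ :=
  t₂.lam * (t₁.lam + t₂.lam + t₃.lam) / ((t₁.lam + t₂.lam) * (t₂.lam + t₃.lam))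


theorem sgn_add (a b : ZMod 2) : sgn (a + b) = sgn a * sgn b := by
  have h : (1 : ZMod 2) + 1 = 0 := by decide
  have hc : ∀ x : ZMod 2, x = 0 ∨ x = 1 := by decide
  rcases hc a with rfl | rfl <;> rcases hc b with rfl | rfl <;> simp [sgn, h]

theorem sgn_cases (a : ZMod 2) : sgn a = 1 ∨ sgn a = -1 := by
  unfold sgn; split_ifs <;> simp

theorem lam4 (a b : Triple) : (T4 a b).lam = a.lam + b.lam := by
  change a.lam + b.lam + 0 = _; ring
theorem lam6 (a b : Triple) : (T6 a b).lam = a.lam + b.lam := by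
  change a.lam + b.lam + 0 = _; ring
theorem lam7 (a b : Triple) : (T7 a b).lam = a.lam + b.lam := by
  change a.lam + b.lam + 0 + -0 + -0 + 0 = _; ring
theorem lam9 (a b : Triple) : (T9 a b).lam = a.lam + b.lam := by
  change a.lam + b.lam + 0 + -0 + -0 + 0 = _; ring
theorem sg4 (a b : Triple) : sgn (T4 a b).sg = sgn a.sg * sgn b.sg := by
  change sgn (a.sg + b.sg + 0) = _; rw [add_zero, sgn_add]
theorem sg7 (a b : Triple) : sgn (T7 a b).sg = - (sgn a.sg * sgn b.sg) := by
  change sgn (a.sg + b.sg + 0 + -0 + -0 + 1) = _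
  simp only [neg_zero, add_zero, sgn_add]
  simp [sgn]

theorem bmap_vv {M : Type*} [AddCommGroup M] [Module ℚ M] (p q : M) : bmap p q vv = p := by
  simp [bmap, vv]
theorem bmap_ww {M : Type*} [AddCommGroup M] [Module ℚ M] (p q : M) : bmap p q ww = q := by
  simp [bmap, ww]

theorem L_vv (a b : Triple) : Lmap a b (vv ⊗ₜ vv) = vv := by
  simp [Lmap, vv]
theorem L_wv (a b : Triple) : Lmap a b (ww ⊗ₜ vv) = (a.lam / (a.lam + b.lam)) • ww := by
  simp [Lmap, vv, ww]
theorem L_vw (a b : Triple) :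
    Lmap a b (vv ⊗ₜ ww) = (sgn a.sg * b.lam / (a.lam + b.lam)) • ww := by
  simp [Lmap, vv, ww]
theorem L_ww (a b : Triple) : Lmap a b (ww ⊗ₜ ww) = 0 := by
  simp [Lmap, ww]
theorem L'_vv (a b : Triple) : L'map a b (vv ⊗ₜ vv) = 0 := by
  simp [L'map, vv]
theorem L'_wv (a b : Triple) : L'map a b (ww ⊗ₜ vv) = (- sgn a.sg) • vv := by
  simp [L'map, vv, ww]
theorem L'_vw (a b : Triple) : L'map a b (vv ⊗ₜ ww) = vv := by
  simp [L'map, vv, ww]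
theorem L'_ww (a b : Triple) : L'map a b (ww ⊗ₜ ww) = ww := by
  simp [L'map, ww]

theorem VV_ext {M : Type*} [AddCommGroup M] [Module ℚ M] {f g : VV →ₗ[ℚ] M}
    (h1 : f (vv ⊗ₜ vv) = g (vv ⊗ₜ vv)) (h2 : f (vv ⊗ₜ ww) = g (vv ⊗ₜ ww))
    (h3 : f (ww ⊗ₜ vv) = g (ww ⊗ₜ vv)) (h4 : f (ww ⊗ₜ ww) = g (ww ⊗ₜ ww)) : f = g := by
  apply TensorProduct.ext'
  intro x y
  have hx : ∀ x : V, x = x.1 • vv + x.2 • ww := by intro x; simp [vv, ww]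
  rw [hx x, hx y]
  simp only [add_tmul, tmul_add, ← smul_tmul', tmul_smul, map_add, map_smul, h1, h2, h3, h4]

/-- Lemma 26. -/
theorem stmt14 (t₁ t₂ t₃ : Triple)
    (h₁ : t₁.lam ≠ 0) (h₂ : t₂.lam ≠ 0) (h₃ : t₃.lam ≠ 0)
    (h₁₂ : t₁.lam + t₂.lam ≠ 0) (h₂₃ : t₂.lam + t₃.lam ≠ 0)
    (h₁₂₃ : t₁.lam + t₂.lam + t₃.lam ≠ 0) :
    TensorProduct.map (Lmap t₁ t₂) LinearMap.id
        ∘ₗ (TensorProduct.assoc ℚ V V V).symm.toLinearMap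
        ∘ₗ TensorProduct.map LinearMap.id (Ymap t₂ t₃) =
      Ymap (T4 t₁ t₂) t₃ ∘ₗ Lmap t₁ (T6 t₂ t₃)
      + (sgn t₂.sg * t₁.lam / (t₁.lam + t₂.lam)) •
          (Y'map (T4 t₁ t₂) t₃ ∘ₗ L'map t₁ (T6 t₂ t₃)) ∧
    TensorProduct.map (L'map t₁ t₂) LinearMap.id
        ∘ₗ (TensorProduct.assoc ℚ V V V).symm.toLinearMap
        ∘ₗ TensorProduct.map LinearMap.id (Y'map t₂ t₃) =
      Y'map (T7 t₁ t₂) t₃ ∘ₗ L'map t₁ (T9 t₂ t₃)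
      - (sgn t₂.sg * t₃.lam / (t₂.lam + t₃.lam)) •
          (Ymap (T7 t₁ t₂) t₃ ∘ₗ Lmap t₁ (T9 t₂ t₃)) ∧
    TensorProduct.map (L'map t₁ t₂) LinearMap.id
        ∘ₗ (TensorProduct.assoc ℚ V V V).symm.toLinearMap
        ∘ₗ TensorProduct.map LinearMap.id (Ymap t₂ t₃) =
      Ymap (T7 t₁ t₂) t₃ ∘ₗ L'map t₁ (T6 t₂ t₃) ∧
    TensorProduct.map (Lmap t₁ t₂) LinearMap.id
        ∘ₗ (TensorProduct.assoc ℚ V V V).symm.toLinearMap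
        ∘ₗ TensorProduct.map LinearMap.id (Y'map t₂ t₃) =
      kap t₁ t₂ t₃ • (Y'map (T4 t₁ t₂) t₃ ∘ₗ Lmap t₁ (T9 t₂ t₃)) := by
  have h₁₂₃' : t₁.lam + (t₂.lam + t₃.lam) ≠ 0 := by rwa [← add_assoc]
  refine ⟨?_, ?_, ?_, ?_⟩ <;> apply VV_ext <;>
    simp only [LinearMap.comp_apply, LinearMap.add_apply, LinearMap.sub_apply,
      LinearMap.smul_apply, TensorProduct.map_tmul, LinearMap.id_apply, Ymap, Y'map,
      bmap_vv, bmap_ww, LinearEquiv.coe_coe, tmul_add, tmul_sub, tmul_smul, map_add, map_sub,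
      map_smul, map_zero, TensorProduct.assoc_symm_tmul, L_vv, L_vw, L_wv, L_ww,
      L'_vv, L'_vw, L'_wv, L'_ww, lam4, lam6, lam7, lam9, sg4, sg7, kap, zero_tmul,
      ← smul_tmul'] <;>
    rcases sgn_cases t₁.sg with e1 | e1 <;> rcases sgn_cases t₂.sg with e2 | e2 <;>
    (try simp only [e1, e2]) <;>
    first
    | module
    | (match_scalars <;> field_simp <;> ring)
end
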